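/- arXiv:1410.7237 — 10 statements merged into one kernel-verified Lean document; each statement's English description precedes it below -/
import Mathlib

section
/- Let F = (f_1,…,f_d) be a relative prime vector with ∏_{i=1}^d f_i = n. Then for all nonnegative integers x and y, R(x) = R(y) if and only if x ≡ y (mod n), where R is the residue vector with respect to F. -/
/-!
Appending a last entry `f` to the vector multiplies the modulus by `f` and adds one component.
If `P` is the product of the earlier entries and `h` of them equal `f`, then `P = f ^ h * Q` with
`Q` coprime to `f`. By the Chinese remainder theorem (`Nat.modEq_and_modEq_iff_modEq_mul`),
congruence modulo `P * f = f ^ (h + 1) * Q` is congruence modulo `Q` and modulo `f ^ (h + 1)`, and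
the latter is congruence modulo `f ^ h` together with equality of the base-`f` digits at position
`h` (`modEq_mul_iff_digit`). That digit is the new component, so induction on the length of
the vector gives the theorem.
-/

theorem modEq_mul_iff_digit (a b x y : ℕ) :
    x ≡ y [MOD a * b] ↔ x ≡ y [MOD a] ∧ x / a % b = y / a % b := by
  constructor
  · intro h
    refine ⟨h.of_mul_right b, ?_⟩
    have h' : x % (a * b) / a = y % (a * b) / a := by rw [h]
    simpa only [Nat.mod_mul_right_div_self] using h'
  · rintro ⟨h1, h2⟩
    unfold Nat.ModEq at h1 ⊢
    rw [Nat.mod_mul, Nat.mod_mul, h1, h2]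

/-- The inductive step: passing from the modulus `f ^ h * Q` to `f ^ h * Q * f`, with `Q` coprime
to `f`, amounts to comparing one more base-`f` digit. -/
theorem modEq_append_iff (f h Q x y : ℕ) (hQ : Nat.Coprime f Q) :
    x ≡ y [MOD f ^ h * Q * f] ↔
      x ≡ y [MOD f ^ h * Q] ∧ x / f ^ h % f = y / f ^ h % f := by
  have e : f ^ h * Q * f = f ^ h * f * Q := by ring
  have c1 : Nat.Coprime (f ^ h) Q := hQ.pow_left h
  have c2 : Nat.Coprime (f ^ h * f) Q := c1.mul_left hQ
  rw [e, ← Nat.modEq_and_modEq_iff_modEq_mul c2, ← Nat.modEq_and_modEq_iff_modEq_mul c1,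
    modEq_mul_iff_digit]
  tauto

/-- The product of numbers each equal or coprime to `f`, with the power of `f` contributed by the
factors equal to `f` split off. -/
theorem prod_eq_pow_mul_coprime {d : ℕ} (G : Fin d → ℕ) (f : ℕ)
    (h : ∀ i, G i = f ∨ Nat.Coprime (G i) f) :
    ∃ Q, Nat.Coprime f Q ∧
      ∏ i, G i = f ^ (Finset.univ.filter (fun j => G j = f)).card * Q := by
  refine ⟨∏ i ∈ Finset.univ.filter (fun j => ¬ G j = f), G i, ?_, ?_⟩
  · refine Nat.Coprime.prod_right fun i hi => ?_
    exact ((h i).resolve_left (Finset.mem_filter.mp hi).2).symm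
  · rw [← Finset.prod_filter_mul_prod_filter_not Finset.univ (fun j => G j = f)]
    congr 1
    exact Finset.prod_eq_pow_card fun i hi => (Finset.mem_filter.mp hi).2

/-- Let `F = (f_1,…,f_d)` be a relative prime vector (nondecreasing, positive entries,
any two entries equal or coprime) with `∏ f_i = n`.  Then for all nonnegative integers
`x, y`, the residue vectors of `x` and `y` with respect to `F` coincide iff
`x ≡ y (mod n)`.  Here the `i`-th component of the residue vector of `x` is
`⌊x / f_i^{h_i}⌋ mod f_i`, where `h_i` is the number of earlier entries equal to `f_i`. -/
theorem stmt_1 (d n : ℕ) (F : Fin d → ℕ)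
    (hpos : ∀ i, 0 < F i)
    (hmono : Monotone F)
    (hrp : ∀ i j, F i = F j ∨ Nat.Coprime (F i) (F j))
    (hprod : ∏ i, F i = n)
    (x y : ℕ) :
    (∀ i : Fin d,
        x / (F i) ^ ((Finset.univ.filter (fun j : Fin d => j < i ∧ F j = F i)).card) % F i
          = y / (F i) ^ ((Finset.univ.filter (fun j : Fin d => j < i ∧ F j = F i)).card) % F i)
      ↔ x ≡ y [MOD n] := by
  induction d generalizing n with
  | zero =>
    subst hprod
    simp [Nat.modEq_one]
  | succ d ih =>
    have ih' := ih _ (fun i => F i.castSucc) (fun i => hpos _)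
      (fun i j hij => hmono (Fin.castSucc_le_castSucc_iff.mpr hij)) (fun i j => hrp _ _) rfl
    -- The number of earlier equal entries is unaffected by the new last entry.
    have hcast : ∀ i : Fin d,
        (Finset.univ.filter (fun j : Fin (d + 1) =>
          j < i.castSucc ∧ F j = F i.castSucc)).card
        = (Finset.univ.filter (fun j : Fin d =>
          j < i ∧ F j.castSucc = F i.castSucc)).card := by
      intro i
      simp [-Finset.sum_boole, Finset.card_filter, Fin.sum_univ_castSucc, Fin.castSucc_lt_castSucc_iff,
        (Fin.castSucc_lt_last i).not_gt]
    have hlast : (Finset.univ.filter (fun j : Fin (d + 1) =>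
          j < Fin.last d ∧ F j = F (Fin.last d))).card
        = (Finset.univ.filter (fun j : Fin d =>
          F j.castSucc = F (Fin.last d))).card := by
      simp [-Finset.sum_boole, Finset.card_filter, Fin.sum_univ_castSucc, Fin.castSucc_lt_last]
    obtain ⟨Q, hQ, hP⟩ := prod_eq_pow_mul_coprime (fun i => F i.castSucc) (F (Fin.last d))
      (fun i => hrp _ _)
    rw [Fin.forall_fin_succ', ← hprod, Fin.prod_univ_castSucc, hP,
      modEq_append_iff _ _ _ _ _ hQ, ← hP, ← ih', hlast]
    simp only [hcast]
end

section
/- Let F = (f_1,…,f_d) be a relative prime vector, and let s, s' ⊆ {1,…,d} be lexicographically smallest index sets with ∏_{i∈s} f_i = p and ∏_{i∈s'} f_i = p'. Then gcd(p, p') = ∏_{i ∈ s ∩ s'} f_i. -/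
/-!
Split each product as the common factor over `s ∩ s'` times the product over `s \ s'`,
respectively `s' \ s`. Since both sets are closed under passing to smaller indices with the same
entry, no entry at an index of `s \ s'` equals one at an index of `s' \ s`; such entries are
therefore coprime, hence so are the two remaining products, and the gcd is the common factor.
-/

/-- Let `F` be a relative prime vector and `s, s'` lexicographically smallest index sets
with `∏_{i∈s} f_i = p` and `∏_{i∈s'} f_i = p'`.  Then `gcd(p, p') = ∏_{i ∈ s ∩ s'} f_i`. -/
theorem stmt_4 (d : ℕ) (F : Fin d → ℕ)
    (hpos : ∀ i, 0 < F i)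
    (hmono : Monotone F)
    (hrp : ∀ i j, F i = F j ∨ Nat.Coprime (F i) (F j))
    (s s' : Finset (Fin d)) (p p' : ℕ)
    (hlex : ∀ i ∈ s, ∀ i' : Fin d, i' < i → F i' = F i → i' ∈ s)
    (hlex' : ∀ i ∈ s', ∀ i' : Fin d, i' < i → F i' = F i → i' ∈ s')
    (hp : ∏ i ∈ s, F i = p)
    (hp' : ∏ i ∈ s', F i = p') :
    Nat.gcd p p' = ∏ i ∈ s ∩ s', F i := by
  -- Equal entries at `i ∈ s \ s'` and `j ∈ s' \ s` are impossible: the smaller of the two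
  -- indices would lie in both sets.
  have hcop : Nat.Coprime (∏ i ∈ s \ s', F i) (∏ j ∈ s' \ s, F j) := by
    refine Nat.Coprime.prod_left fun i hi => Nat.Coprime.prod_right fun j hj => ?_
    rw [Finset.mem_sdiff] at hi hj
    refine (hrp i j).resolve_left fun h => ?_
    rcases lt_trichotomy i j with hij | hij | hij
    · exact hi.2 (hlex' j hj.1 i hij h)
    · exact hi.2 (hij ▸ hj.1)
    · exact hj.2 (hlex i hi.1 j hij h.symm)
  rw [← hp, ← hp', ← Finset.prod_inter_mul_prod_sdiff s s' F,
    ← Finset.prod_inter_mul_prod_sdiff s' s F, Finset.inter_comm s' s, Nat.gcd_mul_left,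
    hcop.gcd_eq_one, mul_one]
end

section
/- Let F = (f_1,…,f_d) be a relative prime vector with ∏_{i=1}^d f_i = p. Then the map sending x to its residue vector R(x) = (r_1(x),…,r_d(x)) is a bijection from {0,1,…,p−1} onto the product set {0,…,f_1−1} × ⋯ × {0,…,f_d−1}. -/
/-! Both sides have `∏ i, F i = p` elements, so injectivity suffices. For a value `v` taken `m`
times by `F`, the entries equal to `v` have exactly the exponents `0, …, m - 1`
(`exists_rank_eq`), so their residues are the first `m` base-`v` digits of `x` and hence determine
`x` modulo `v ^ m`. Distinct values are coprime, so the residue vector determines `x` modulo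
`∏ v ^ m = p`. -/

/-- Every `k < s.card` is the number of predecessors in `s` of some element of `s`. -/
lemma exists_rank_eq {α : Type*} [LinearOrder α] (s : Finset α) {k : ℕ} (hk : k < s.card) :
    ∃ i ∈ s, (s.filter (· < i)).card = k := by
  have hmaps : Set.MapsTo (fun i => (s.filter (· < i)).card) s (Finset.range s.card) := by
    intro i hi
    simp only [Finset.coe_range, Set.mem_Iio]
    apply Finset.card_lt_card
    refine Finset.filter_ssubset.2 ⟨i, hi, lt_irrefl i⟩
  have hlt : ∀ i ∈ s, ∀ j ∈ s, i < j → (s.filter (· < i)).card < (s.filter (· < j)).card := by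
    intro i hi j _ hij
    apply Finset.card_lt_card
    refine (Finset.ssubset_iff_of_subset ?_).2 ⟨i, by simp [hi, hij], by simp⟩
    intro a ha
    simp only [Finset.mem_filter] at ha ⊢
    exact ⟨ha.1, ha.2.trans hij⟩
  have hinj : Set.InjOn (fun i => (s.filter (· < i)).card) s := by
    intro i hi j hj h
    rcases lt_trichotomy i j with hij | hij | hij
    · exact absurd h (hlt i hi j hj hij).ne
    · exact hij
    · exact absurd h (hlt j hj i hi hij).ne'
  obtain ⟨i, hi, h⟩ := Finset.surjOn_of_injOn_of_card_le _ hmaps hinj (by simp)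
    (show k ∈ (Finset.range s.card : Set ℕ) by simpa using hk)
  exact ⟨i, hi, h⟩

/-- Let `F = (f_1,…,f_d)` be a relative prime vector with `∏ f_i = p`.  Then the map
sending `x ∈ {0,…,p−1}` to its residue vector with respect to `F` is a bijection onto
`{0,…,f_1−1} × ⋯ × {0,…,f_d−1}`. -/
theorem stmt_6 (d p : ℕ) (F : Fin d → ℕ)
    (hpos : ∀ i, 0 < F i)
    (hmono : Monotone F)
    (hrp : ∀ i j, F i = F j ∨ Nat.Coprime (F i) (F j))
    (hprod : ∏ i, F i = p) :
    Function.Bijective (fun x : Fin p => fun i : Fin d =>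
      (⟨(x : ℕ) / (F i) ^ ((Finset.univ.filter (fun j : Fin d => j < i ∧ F j = F i)).card) % F i,
        Nat.mod_lt _ (hpos i)⟩ : Fin (F i))) := by
  rw [Fintype.bijective_iff_injective_and_card]
  refine ⟨?_, by simp [hprod]⟩
  intro x y hxy
  have hres : ∀ i, (x : ℕ) / (F i) ^
      ((Finset.univ.filter (fun j : Fin d => j < i ∧ F j = F i)).card) % F i = (y : ℕ) / (F i) ^
      ((Finset.univ.filter (fun j : Fin d => j < i ∧ F j = F i)).card) % F i :=
    fun i => congrArg Fin.val (congrFun hxy i)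
  -- agreement of the first `k` base-`v` digits
  have hdigits : ∀ v k, k ≤ (Finset.univ.filter (fun j : Fin d => F j = v)).card →
      (x : ℕ) % v ^ k = (y : ℕ) % v ^ k := by
    intro v k
    induction k with
    | zero => simp [Nat.mod_one]
    | succ k ih =>
      intro hk
      obtain ⟨i, hi, hrank⟩ := exists_rank_eq _ (Nat.lt_of_succ_le hk)
      obtain rfl : F i = v := by simpa using hi
      have hi' := hres i
      rw [Finset.filter_filter] at hrank
      simp only [and_comm (a := F _ = F i)] at hrank
      rw [hrank] at hi'
      rw [Nat.mod_pow_succ, Nat.mod_pow_succ, ih (by omega), hi']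
  have hdvd : ((p : ℕ) : ℤ) ∣ (y : ℤ) - (x : ℤ) := by
    have hp : p = ∏ v ∈ Finset.univ.image F,
        v ^ (Finset.univ.filter (fun j : Fin d => F j = v)).card :=
      hprod.symm.trans (Finset.prod_comp (fun v => v) F)
    refine (congrArg (Nat.cast (R := ℤ)) hp).dvd.trans ?_
    push_cast
    refine Finset.prod_dvd_of_coprime ?_ ?_
    · intro v hv w hw hne
      simp only [Finset.coe_image, Finset.coe_univ, Set.image_univ, Set.mem_range] at hv hw
      obtain ⟨i, rfl⟩ := hv
      obtain ⟨j, rfl⟩ := hw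
      exact ((Nat.isCoprime_iff_coprime.2 ((hrp i j).resolve_left hne)).pow)
    · intro v _
      have h := (Nat.modEq_iff_dvd).1 (hdigits v _ le_rfl)
      exact_mod_cast h
  exact Fin.ext ((Nat.modEq_iff_dvd.2 hdvd).eq_of_lt_of_lt x.2 y.2)
end

section
/- Let F = (f_1,…,f_d) be a relative prime vector with all entries f_i ≥ 2, and for j = 1,…,n let s_j ⊆ {1,…,d} be a lexicographically smallest index set with ∏_{i∈s_j} f_i = p_j. Then there exist start times t_1,…,t_n with t_j ∈ {0,…,p_j−1} such that t_j ≢ t_k (mod gcd(p_j, p_k)) for all j ≠ k, if and only if the Partial Coding instance with attribute value ranges f_1,…,f_d and symbols s_1,…,s_n admits a feasible encoding. -/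
/-!
The proof expands integers in a mixed system of digits. Let `r i` be the number of indices `i' < i`
with `F i' = F i`. The digit of `t` at attribute `i` is `t / F i ^ r i % F i`, the `r i`-th digit of
`t` in base `F i`. Call an index set closed if it contains, with `i`, every `i' < i` with
`F i' = F i`; the lexicographically smallest index sets are the closed ones.

For a closed `S`, the digits at the attributes in `S` determine `t` modulo `∏ i ∈ S, F i`
(`modEq_prod_of_digit_eq`), and they can be prescribed arbitrarily (`exists_digits`). Both are proved
by adding the largest index `i` last: the product over the earlier indices is `F i ^ r i * Q` with `Q`
coprime to `F i` (`prod_eq_pow_mul`), so the Chinese remainder theorem applies. Finally the gcd of the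
products over closed sets `A` and `B` divides the product over `A ∩ B`, because no value of `F` occurs
on both `A \ B` and `B \ A` (`gcd_prod_dvd`). Hence start times collide exactly when their digits
agree on all common attributes.
-/

namespace PartialCoding

variable {d : ℕ} {F : Fin d → ℕ}

/-- The lexicographically smallest index sets: with `i`, all earlier indices of equal value. -/
def LexClosed (F : Fin d → ℕ) (S : Finset (Fin d)) : Prop :=
  ∀ i ∈ S, ∀ k : Fin d, k < i → F k = F i → k ∈ S

/-- The number of earlier attributes with the same value range. -/
def rank (F : Fin d → ℕ) (i : Fin d) : ℕ :=
  (Finset.univ.filter fun k => k < i ∧ F k = F i).card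

/-- The digit of `t` at attribute `i`: its `rank F i`-th digit in base `F i`. -/
def digit (F : Fin d → ℕ) (i : Fin d) (t : ℕ) : ℕ :=
  t / F i ^ rank F i % F i

theorem pow_dvd_prod {S : Finset (Fin d)} (hS : LexClosed F S) {i : Fin d} (hi : i ∈ S) :
    F i ^ (rank F i + 1) ∣ ∏ x ∈ S, F x := by
  classical
  have hsub : insert i (Finset.univ.filter fun k => k < i ∧ F k = F i) ⊆ S := by
    intro x hx
    simp only [Finset.mem_insert, Finset.mem_filter, Finset.mem_univ, true_and] at hx
    rcases hx with rfl | ⟨h1, h2⟩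
    · exact hi
    · exact hS i hi x h1 h2
  refine dvd_trans (dvd_of_eq ?_) (Finset.prod_dvd_prod_of_subset _ _ F hsub)
  rw [Finset.prod_insert (by simp), Finset.prod_congr rfl (g := fun _ => F i)
    (fun x hx => (Finset.mem_filter.mp hx).2.2), Finset.prod_const, rank, pow_succ']

theorem LexClosed.of_insert {S : Finset (Fin d)} {i : Fin d} (hmax : ∀ x ∈ S, x < i)
    (hS : LexClosed F (insert i S)) : LexClosed F S := by
  intro x hx y hy hxy
  rcases Finset.mem_insert.mp (hS x (Finset.mem_insert_of_mem hx) y hy hxy) with rfl | h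
  · exact absurd (hmax x hx) hy.asymm
  · exact h

theorem prod_eq_pow_mul (hrp : ∀ i j, F i = F j ∨ Nat.Coprime (F i) (F j))
    {S : Finset (Fin d)} {i : Fin d} (hmax : ∀ x ∈ S, x < i) (hS : LexClosed F (insert i S)) :
    ∃ Q, ∏ x ∈ S, F x = F i ^ rank F i * Q ∧ Nat.Coprime (F i) Q := by
  classical
  refine ⟨∏ x ∈ S with ¬ F x = F i, F x, ?_, ?_⟩
  · rw [← Finset.prod_filter_mul_prod_filter_not S (fun x => F x = F i)]
    congr 1
    have hset : (S.filter fun x => F x = F i) =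
        Finset.univ.filter fun k => k < i ∧ F k = F i := by
      ext x
      simp only [Finset.mem_filter, Finset.mem_univ, true_and]
      refine ⟨fun h => ⟨hmax x h.1, h.2⟩, fun h => ⟨?_, h.2⟩⟩
      exact Finset.mem_of_mem_insert_of_ne
        (hS i (Finset.mem_insert_self _ _) x h.1 h.2) h.1.ne
    rw [hset, Finset.prod_congr rfl (g := fun _ => F i)
      (fun x hx => (Finset.mem_filter.mp hx).2.2), Finset.prod_const, rank]
  · refine Nat.Coprime.prod_right fun x hx => ?_
    exact (hrp i x).resolve_left fun h => (Finset.mem_filter.mp hx).2 h.symm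

theorem digit_eq_of_modEq {i : Fin d} {t u : ℕ}
    (h : t ≡ u [MOD F i ^ (rank F i + 1)]) : digit F i t = digit F i u := by
  unfold digit
  rw [← Nat.mod_mul_right_div_self, ← Nat.mod_mul_right_div_self, ← pow_succ, h]

theorem modEq_pow_succ {i : Fin d} {t u : ℕ} (h : t ≡ u [MOD F i ^ rank F i])
    (hd : digit F i t = digit F i u) : t ≡ u [MOD F i ^ (rank F i + 1)] := by
  unfold digit at hd
  unfold Nat.ModEq at h ⊢
  rw [pow_succ, Nat.mod_mul, Nat.mod_mul, h, hd]

/-- Uniqueness: the digits at a closed set determine a number modulo the product. -/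
theorem modEq_prod_of_digit_eq (hrp : ∀ i j, F i = F j ∨ Nat.Coprime (F i) (F j)) {t u : ℕ}
    (S : Finset (Fin d)) (hS : LexClosed F S) (hd : ∀ i ∈ S, digit F i t = digit F i u) :
    t ≡ u [MOD ∏ x ∈ S, F x] := by
  classical
  induction S using Finset.induction_on_max with
  | empty => simpa using Nat.modEq_one
  | insert i S hmax ih =>
    have hi : i ∉ S := fun h => lt_irrefl _ (hmax i h)
    have ht := ih (hS.of_insert hmax) fun x hx => hd x (Finset.mem_insert_of_mem hx)
    obtain ⟨Q, hQ, hco⟩ := prod_eq_pow_mul hrp hmax hS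
    rw [hQ] at ht
    rw [Finset.prod_insert hi, hQ, ← mul_assoc, ← pow_succ']
    exact (Nat.modEq_and_modEq_iff_modEq_mul (hco.pow_left _)).mp
      ⟨modEq_pow_succ (ht.of_mul_right _) (hd i (Finset.mem_insert_self _ _)),
        ht.of_mul_left _⟩

/-- Existence: the digits at a closed set can be prescribed. -/
theorem exists_digits (h2 : ∀ i, 2 ≤ F i)
    (hrp : ∀ i j, F i = F j ∨ Nat.Coprime (F i) (F j)) (c : Fin d → ℕ)
    (S : Finset (Fin d)) (hS : LexClosed F S) (hc : ∀ i ∈ S, c i < F i) :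
    ∃ t, ∀ i ∈ S, digit F i t = c i := by
  classical
  induction S using Finset.induction_on_max with
  | empty => exact ⟨0, by simp⟩
  | insert i S hmax ih =>
    have hS' := hS.of_insert hmax
    obtain ⟨u, hu⟩ := ih hS' fun x hx => hc x (Finset.mem_insert_of_mem hx)
    obtain ⟨Q, hQ, hco⟩ := prod_eq_pow_mul hrp hmax hS
    have hpos : 0 < F i ^ rank F i := pow_pos (by have := h2 i; omega) _
    -- Keep the lower base-`F i` digits of `u`, set the next one to `c i`, and keep `u` modulo `Q`.
    obtain ⟨t, ht1, ht2⟩ := Nat.chineseRemainder (hco.pow_left (rank F i + 1))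
      (u % F i ^ rank F i + F i ^ rank F i * c i) u
    refine ⟨t, fun x hx => ?_⟩
    rcases Finset.mem_insert.mp hx with rfl | hx
    · rw [digit_eq_of_modEq ht1, digit, Nat.add_mul_div_left _ _ hpos,
        Nat.div_eq_of_lt (Nat.mod_lt _ hpos), zero_add, Nat.mod_eq_of_lt (hc _ hx)]
    · have htu : t ≡ u [MOD ∏ y ∈ S, F y] := by
        rw [hQ]
        refine (Nat.modEq_and_modEq_iff_modEq_mul (hco.pow_left _)).mp ⟨?_, ht2⟩
        refine (ht1.of_dvd (pow_dvd_pow _ (Nat.le_succ _))).trans ?_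
        simp [Nat.ModEq]
      rw [digit_eq_of_modEq (htu.of_dvd (pow_dvd_prod hS' hx)), hu x hx]

theorem gcd_prod_dvd (hrp : ∀ i j, F i = F j ∨ Nat.Coprime (F i) (F j))
    {A B : Finset (Fin d)} (hA : LexClosed F A) (hB : LexClosed F B) :
    Nat.gcd (∏ x ∈ A, F x) (∏ x ∈ B, F x) ∣ ∏ x ∈ A ∩ B, F x := by
  classical
  have hco : Nat.Coprime (∏ x ∈ A \ B, F x) (∏ x ∈ B \ A, F x) := by
    refine Nat.Coprime.prod_left fun x hx => Nat.Coprime.prod_right fun y hy => ?_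
    rw [Finset.mem_sdiff] at hx hy
    refine (hrp x y).resolve_left fun h => ?_
    rcases lt_trichotomy x y with hlt | rfl | hlt
    · exact hx.2 (hB y hy.1 x hlt h)
    · exact hx.2 hy.1
    · exact hy.2 (hA x hx.1 y hlt h.symm)
  rw [← Finset.prod_inter_mul_prod_sdiff A B, ← Finset.prod_inter_mul_prod_sdiff B A,
    Finset.inter_comm B A, Nat.gcd_mul_left, hco.gcd_eq_one, mul_one]

end PartialCoding

/-- Let `F` be a relative prime vector with all entries `≥ 2` and, for `j = 1,…,n`, let
`s_j` be a lexicographically smallest index set with `∏_{i∈s_j} f_i = p_j`.  Then there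
exist start times `t_j ∈ {0,…,p_j−1}` with `t_j ≢ t_k (mod gcd(p_j,p_k))` for all
`j ≠ k` (a collision-free exact-period schedule) iff the Partial Coding instance with
value ranges `f_1,…,f_d` and symbols `s_1,…,s_n` admits a feasible encoding. -/
theorem stmt_7 (d n : ℕ) (F : Fin d → ℕ)
    (h2 : ∀ i, 2 ≤ F i)
    (hmono : Monotone F)
    (hrp : ∀ i j, F i = F j ∨ Nat.Coprime (F i) (F j))
    (s : Fin n → Finset (Fin d)) (p : Fin n → ℕ)
    (hlex : ∀ j, ∀ i ∈ s j, ∀ i' : Fin d, i' < i → F i' = F i → i' ∈ s j)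
    (hp : ∀ j, ∏ i ∈ s j, F i = p j) :
    (∃ t : Fin n → ℕ, (∀ j, t j < p j) ∧
        ∀ j k, j ≠ k → ¬ (t j ≡ t k [MOD Nat.gcd (p j) (p k)]))
      ↔ (∃ c : Fin n → Fin d → ℕ,
          (∀ j, ∀ i ∈ s j, c j i < F i) ∧
          ∀ j k, j ≠ k → ∃ i ∈ s j ∩ s k, c j i ≠ c k i) := by
  classical
  have hpos : ∀ j, 0 < p j := fun j => by
    rw [← hp j]
    exact Finset.prod_pos fun i _ => by have := h2 i; omega
  constructor
  · rintro ⟨t, -, hcol⟩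
    refine ⟨fun j i => PartialCoding.digit F i (t j),
      fun j i _ => Nat.mod_lt _ (by have := h2 i; omega), fun j k hjk => ?_⟩
    by_contra! hne
    have hS : PartialCoding.LexClosed F (s j ∩ s k) := fun i hi i' hlt h =>
      Finset.mem_inter.mpr ⟨hlex j i (Finset.mem_inter.mp hi).1 i' hlt h,
        hlex k i (Finset.mem_inter.mp hi).2 i' hlt h⟩
    refine hcol j k hjk ((PartialCoding.modEq_prod_of_digit_eq hrp _ hS hne).of_dvd ?_)
    rw [← hp j, ← hp k]
    exact PartialCoding.gcd_prod_dvd hrp (hlex j) (hlex k)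
  · rintro ⟨c, hc, hsep⟩
    choose t ht using fun j =>
      PartialCoding.exists_digits h2 hrp (c j) (s j) (hlex j) (hc j)
    refine ⟨fun j => t j % p j, fun j => Nat.mod_lt _ (hpos j), fun j k hjk hmod => ?_⟩
    obtain ⟨i, hi, hne⟩ := hsep j k hjk
    obtain ⟨hij, hik⟩ := Finset.mem_inter.mp hi
    have hdj := PartialCoding.pow_dvd_prod (hlex j) hij
    have hdk := PartialCoding.pow_dvd_prod (hlex k) hik
    rw [hp] at hdj hdk
    apply hne
    rw [← ht j i hij, ← ht k i hik]
    apply PartialCoding.digit_eq_of_modEq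
    exact (((Nat.mod_modEq _ _).of_dvd hdj).symm.trans (hmod.of_dvd (Nat.dvd_gcd hdj hdk))).trans
      ((Nat.mod_modEq _ _).of_dvd hdk)
end

section
/- Let f_1 < f_2 < ⋯ < f_d be pairwise distinct prime numbers, let s_1,…,s_n ⊆ {1,…,d}, and set p_j = ∏_{i∈s_j} f_i for j = 1,…,n. Then the Partial Coding instance with value ranges f_1,…,f_d and symbols s_1,…,s_n admits a feasible encoding if and only if there exist integers t_1,…,t_n such that t_j ≢ t_k (mod gcd(p_j, p_k)) for all j ≠ k. -/
/-!
Encoding `c` and start times `t` correspond through `t j ≡ c j i (mod f i)` for `i ∈ s j`: the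
Chinese remainder theorem produces `t` from `c`, and reduction modulo `f i` produces `c` from `t`.
Under this correspondence an attribute `i ∈ s j ∩ s k` separates `j` and `k` exactly when
`t j ≢ t k (mod f i)`. As the `f i` are distinct primes, `gcd (p j) (p k)` is the product of the
`f i` over `s j ∩ s k`, so such an attribute exists iff `t j ≢ t k (mod gcd (p j) (p k))`.
-/

/-- The two sides are in fact equal; the converse divisibility holds without coprimality. -/
lemma gcd_prod_dvd_prod_inter {ι : Type*} [DecidableEq ι] (f : ι → ℕ)
    (hf : Pairwise (Function.onFun Nat.Coprime f)) (A B : Finset ι) :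
    Nat.gcd (∏ i ∈ A, f i) (∏ i ∈ B, f i) ∣ ∏ i ∈ A ∩ B, f i := by
  have hcop : Nat.Coprime (∏ i ∈ A \ B, f i) (∏ i ∈ B, f i) := by
    refine Nat.Coprime.prod_left fun i hi => Nat.Coprime.prod_right fun k hk => hf ?_
    rintro rfl
    exact (Finset.mem_sdiff.mp hi).2 hk
  rw [← Finset.prod_inter_mul_prod_sdiff A B f]
  rw [Nat.Coprime.gcd_mul_right_cancel _ hcop]
  exact Nat.gcd_dvd_left _ _

/-- Let `f_1 < f_2 < ⋯ < f_d` be pairwise distinct primes, `s_1,…,s_n ⊆ {1,…,d}`, and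
`p_j = ∏_{i∈s_j} f_i`.  Then the Partial Coding instance with value ranges `f_1,…,f_d`
and symbols `s_1,…,s_n` admits a feasible encoding iff there exist integers
`t_1,…,t_n` with `t_j ≢ t_k (mod gcd(p_j,p_k))` for all `j ≠ k`. -/
theorem stmt_8 (d n : ℕ) (f : Fin d → ℕ)
    (hprime : ∀ i, Nat.Prime (f i))
    (hmono : StrictMono f)
    (s : Fin n → Finset (Fin d)) (p : Fin n → ℕ)
    (hp : ∀ j, ∏ i ∈ s j, f i = p j) :
    (∃ c : Fin n → Fin d → ℕ,
        (∀ j, ∀ i ∈ s j, c j i < f i) ∧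
        ∀ j k, j ≠ k → ∃ i ∈ s j ∩ s k, c j i ≠ c k i)
      ↔ (∃ t : Fin n → ℤ,
          ∀ j k, j ≠ k → ¬ (t j ≡ t k [ZMOD (Nat.gcd (p j) (p k) : ℤ)])) := by
  have hcop : Pairwise (Function.onFun Nat.Coprime f) := fun i k hik =>
    (Nat.coprime_primes (hprime i) (hprime k)).mpr (hmono.injective.ne hik)
  constructor
  · rintro ⟨c, hc, hsep⟩
    have crt : ∀ j, ∃ x : ℕ, ∀ i ∈ s j, x ≡ c j i [MOD f i] := fun j =>
      let x := Nat.chineseRemainderOfFinset (c j) f (s j) (fun i _ => (hprime i).ne_zero)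
        (fun i _ k _ hik => hcop hik)
      ⟨x.1, x.2⟩
    choose x hx using crt
    refine ⟨fun j => (x j : ℤ), fun j k hjk hmod => ?_⟩
    obtain ⟨i, hi, hne⟩ := hsep j k hjk
    obtain ⟨hij, hik⟩ := Finset.mem_inter.mp hi
    have hdvd : f i ∣ Nat.gcd (p j) (p k) := by
      rw [← hp j, ← hp k]
      exact Nat.dvd_gcd (Finset.dvd_prod_of_mem f hij) (Finset.dvd_prod_of_mem f hik)
    have hx' : x j ≡ x k [MOD f i] := (Int.natCast_modEq_iff.mp hmod).of_dvd hdvd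
    exact hne ((((hx j i hij).symm.trans hx').trans (hx k i hik)).eq_of_lt_of_lt
      (hc j i hij) (hc k i hik))
  · rintro ⟨t, ht⟩
    have hpos : ∀ i, (0 : ℤ) < f i := fun i => by exact_mod_cast (hprime i).pos
    refine ⟨fun j i => (t j % f i).toNat, fun j i _ => ?_, fun j k hjk => ?_⟩
    · have h1 := Int.emod_nonneg (t j) (hpos i).ne'
      have h2 := Int.emod_lt_of_pos (t j) (hpos i)
      dsimp only
      omega
    · by_contra! hall
      apply ht j k hjk
      have hprod : ((∏ i ∈ s j ∩ s k, f i : ℕ) : ℤ) ∣ t k - t j := by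
        rw [Int.natCast_dvd]
        refine Finset.prod_dvd_of_isRelPrime
          (fun a _ b _ hab => Nat.coprime_iff_isRelPrime.mp (hcop hab)) fun i hi => ?_
        have h := hall i hi
        have h1 := Int.emod_nonneg (t j) (hpos i).ne'
        have h2 := Int.emod_nonneg (t k) (hpos i).ne'
        have h3 : t j ≡ t k [ZMOD f i] := by
          change t j % f i = t k % f i
          omega
        exact Int.natCast_dvd.mp h3.dvd
      have hgcd := gcd_prod_dvd_prod_inter f hcop (s j) (s k)
      rw [hp, hp] at hgcd
      exact Int.modEq_iff_dvd.mpr ((Int.natCast_dvd_natCast.mpr hgcd).trans hprod)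
end

section
/- Let (d, f_1,…,f_d, s_1,…,s_n) be a Partial Coding instance and let m ≥ 1. There exists a map g : {1,…,n} → {1,…,m} such that for each class h ∈ {1,…,m} the sub-instance consisting of the symbols {s_j : g(j) = h} admits a feasible encoding, if and only if the Partial Coding instance with d+1 attributes obtained by adding a new attribute of value range m to every symbol (i.e., value ranges f_1,…,f_d,m and symbols s'_j = s_j ∪ {d+1}) admits a feasible encoding. -/
/-- Reduction of multi-machine Windows Scheduling without migration to one machine, in
Partial Coding form.  The symbols of a Partial Coding instance can be partitioned into
`m` classes each admitting a feasible encoding iff the instance obtained by adding one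
new attribute of value range `m` to every symbol admits a feasible encoding. -/
theorem stmt_11 (d n m : ℕ) (hm : 1 ≤ m)
    (f : Fin d → ℕ) (hf : ∀ i, 2 ≤ f i)
    (s : Fin n → Finset (Fin d)) :
    (∃ g : Fin n → Fin m, ∀ h : Fin m,
        ∃ c : Fin n → Fin d → ℕ,
          (∀ j, g j = h → ∀ i ∈ s j, c j i < f i) ∧
          (∀ j k, j ≠ k → g j = h → g k = h → ∃ i ∈ s j ∩ s k, c j i ≠ c k i))
      ↔ (∃ (c : Fin n → Fin d → ℕ) (cstar : Fin n → ℕ),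
          (∀ j, ∀ i ∈ s j, c j i < f i) ∧
          (∀ j, cstar j < m) ∧
          (∀ j k, j ≠ k → (∃ i ∈ s j ∩ s k, c j i ≠ c k i) ∨ cstar j ≠ cstar k)) := by
  constructor
  · rintro ⟨g, hg⟩
    choose c hc hsep using hg
    -- Each symbol is encoded as in its own class; the new attribute records the class.
    refine ⟨fun j => c (g j) j, fun j => g j, fun j => hc (g j) j rfl,
      fun j => (g j).isLt, fun j k hjk => ?_⟩
    by_cases h : g j = g k
    · left
      simpa only [h] using hsep (g k) j k hjk h rfl
    · exact Or.inr fun h' => h (Fin.ext h')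
  · rintro ⟨c, cstar, hc, hstar, hsep⟩
    -- The value of the new attribute is the class, and `c` serves every class.
    refine ⟨fun j => ⟨cstar j, hstar j⟩, fun h => ⟨c, fun j _ => hc j, ?_⟩⟩
    intro j k hjk hj hk
    exact (hsep j k hjk).resolve_right fun hne => hne (Fin.ext_iff.mp (hj.trans hk.symm))
end

section
/- Let p_1,…,p_n be positive integers and t_1,…,t_n integers, and let m ≥ 1. There exist a set K ⊆ {1,…,n} with |K| = m+1 and an integer t* such that t* ≡ t_j (mod p_j) for all j ∈ K, if and only if there exists a set K ⊆ {1,…,n} with |K| = m+1 such that t_i ≡ t_j (mod gcd(p_i, p_j)) for all i, j ∈ K. Equivalently: a schedule of n unit-length jobs with exact periods p_j and start times t_j on m machines with migration allowed is infeasible (some time slot requires more than m simultaneous executions) if and only if there is a set of m+1 jobs that pairwise collide. -/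
/-!
A common solution `t*` of the congruences modulo `p j`, `j ∈ K`, makes `t i` and `t j` both
congruent to `t*` modulo `gcd (p i) (p j)`, so the same set `K` pairwise collides. The converse,
again with the same `K`, is the Chinese remainder theorem for moduli that need not be coprime. It is
proved by adding one congruence at a time (`exists_common_solution`): a solution `x` for a set `s`
may be shifted by multiples of `L = lcm_{j ∈ s} p j`, and such a shift can meet a new congruence
modulo `p a` iff `gcd L (p a) ∣ t a - x`. Since `gcd` distributes over `lcm`, this divisibility
follows from the pairwise hypotheses (`gcd_lcm_dvd_pair`, `gcd_lcm_dvd`).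
-/

/-- Distributivity of `gcd` over a binary `lcm`, as a divisibility criterion. With
`e = gcd (lcm a b) q` and `g` the greatest common divisor of `a`, `b`, `q`, the product
`g * e` divides each of `a * b`, `a * q`, `q * b`, `q * q`, hence it divides
`gcd a q * gcd b q = g * lcm (gcd a q) (gcd b q)`; then `g` is cancelled. -/
lemma gcd_lcm_dvd_pair (a b q d : ℕ) (h1 : Nat.gcd a q ∣ d) (h2 : Nat.gcd b q ∣ d) :
    Nat.gcd (Nat.lcm a b) q ∣ d := by
  refine dvd_trans ?_ (Nat.lcm_dvd h1 h2)
  set e := Nat.gcd (Nat.lcm a b) q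
  set g := Nat.gcd (Nat.gcd a q) (Nat.gcd b q) with hg
  have hel : e ∣ Nat.lcm a b := Nat.gcd_dvd_left _ _
  have heq : e ∣ q := Nat.gcd_dvd_right _ _
  have hga : g ∣ a := (Nat.gcd_dvd_left _ _).trans (Nat.gcd_dvd_left _ _)
  have hgb : g ∣ b := (Nat.gcd_dvd_right _ _).trans (Nat.gcd_dvd_left _ _)
  have hgq : g ∣ q := (Nat.gcd_dvd_right _ _).trans (Nat.gcd_dvd_right _ _)
  rcases Nat.eq_zero_or_pos g with h0 | h0
  · have : Nat.gcd a q = 0 := Nat.eq_zero_of_gcd_eq_zero_left (hg.symm.trans h0)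
    simp [this]
  · refine Nat.dvd_of_mul_dvd_mul_left h0 ?_
    rw [hg, Nat.gcd_mul_lcm, ← hg, ← Nat.gcd_mul_right a (Nat.gcd b q) q,
      ← Nat.gcd_mul_left a b q, ← Nat.gcd_mul_left q b q]
    refine Nat.dvd_gcd (Nat.dvd_gcd ?_ (mul_dvd_mul hga heq)) (Nat.dvd_gcd ?_ (mul_dvd_mul hgq heq))
    · rw [← Nat.gcd_mul_lcm a b]
      exact mul_dvd_mul (Nat.dvd_gcd hga hgb) hel
    · rw [mul_comm q b]
      exact mul_dvd_mul hgb heq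

/-- Distributivity of `gcd` over a finite `lcm`, in the form of a divisibility criterion. -/
lemma gcd_lcm_dvd {ι : Type*} (s : Finset ι) (p : ι → ℕ) (q : ℕ) (d : ℕ)
    (h : ∀ j ∈ s, Nat.gcd (p j) q ∣ d) : Nat.gcd (s.lcm p) q ∣ d := by
  classical
  induction s using Finset.induction_on with
  | empty => simp
  | insert a s ha ih =>
    rw [Finset.lcm_insert]
    have h1 := h a (Finset.mem_insert_self a s)
    have h2 := ih fun j hj => h j (Finset.mem_insert_of_mem hj)
    exact gcd_lcm_dvd_pair _ _ q d h1 h2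

/-- The Chinese remainder theorem for pairwise compatible congruences with arbitrary moduli. -/
lemma exists_common_solution {ι : Type*} (s : Finset ι) (p : ι → ℕ) (t : ι → ℤ)
    (h : ∀ i ∈ s, ∀ j ∈ s, t i ≡ t j [ZMOD (Nat.gcd (p i) (p j) : ℤ)]) :
    ∃ x : ℤ, ∀ j ∈ s, x ≡ t j [ZMOD (p j : ℤ)] := by
  classical
  induction s using Finset.induction_on with
  | empty => exact ⟨0, by simp⟩
  | insert a s ha ih =>
    obtain ⟨x, hx⟩ := ih fun i hi j hj =>
      h i (Finset.mem_insert_of_mem hi) j (Finset.mem_insert_of_mem hj)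
    have hg : ((Nat.gcd (s.lcm p) (p a) : ℕ) : ℤ) ∣ t a - x := by
      rw [Int.natCast_dvd]
      apply gcd_lcm_dvd
      intro j hj
      rw [← Int.natCast_dvd, ← Int.modEq_iff_dvd]
      exact ((hx j hj).of_dvd (Int.natCast_dvd_natCast.2 (Nat.gcd_dvd_left _ _))).trans
        (h j (Finset.mem_insert_of_mem hj) a (Finset.mem_insert_self a s))
    obtain ⟨c, hc⟩ := hg
    rw [Nat.gcd_eq_gcd_ab] at hc
    -- Bézout: `L * u + p a * v = gcd L (p a)`, so shifting `x` by `L * u * c` reaches `t a`.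
    refine ⟨x + (s.lcm p : ℕ) * (Nat.gcdA (s.lcm p) (p a) * c), fun j hj => ?_⟩
    rcases Finset.mem_insert.1 hj with rfl | hj
    · rw [Int.modEq_iff_dvd]
      exact ⟨Nat.gcdB (s.lcm p) (p j) * c, by linear_combination hc⟩
    · have hd : (p j : ℤ) ∣ (s.lcm p : ℕ) := Int.natCast_dvd_natCast.2 (Finset.dvd_lcm hj)
      refine Int.ModEq.trans ?_ (hx j hj)
      rw [Int.modEq_iff_dvd]
      simpa using hd.mul_right _

/-- A schedule of `n` unit-length jobs with exact periods `p_j` and start times `t_j`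
on `m` machines with migration is infeasible (some `m+1` jobs must run simultaneously,
i.e. there are `m+1` jobs whose start-time residues admit a common solution `t*`) iff
there is a set of `m+1` jobs that pairwise collide. -/
theorem stmt_12 (n m : ℕ) (hm : 1 ≤ m)
    (p : Fin n → ℕ) (hp : ∀ j, 0 < p j) (t : Fin n → ℤ) :
    (∃ K : Finset (Fin n), K.card = m + 1 ∧
        ∃ tstar : ℤ, ∀ j ∈ K, tstar ≡ t j [ZMOD (p j : ℤ)])
      ↔ (∃ K : Finset (Fin n), K.card = m + 1 ∧
          ∀ i ∈ K, ∀ j ∈ K, t i ≡ t j [ZMOD (Nat.gcd (p i) (p j) : ℤ)]) := by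
  constructor
  · rintro ⟨K, hK, x, hx⟩
    refine ⟨K, hK, fun i hi j hj => ?_⟩
    exact ((hx i hi).of_dvd (Int.natCast_dvd_natCast.2 (Nat.gcd_dvd_left _ _))).symm.trans
      ((hx j hj).of_dvd (Int.natCast_dvd_natCast.2 (Nat.gcd_dvd_right _ _)))
  · rintro ⟨K, hK, h⟩
    exact ⟨K, hK, exists_common_solution K p t h⟩
end

section
/- Let G = (V, E) be a finite simple graph and k ≥ 1. Consider the Partial Coding instance with one symbol per vertex and, for each edge e = {u,v} ∈ E, one attribute with value range f_e ≥ 2 contained exactly in the two symbols of u and v (and no other attributes). Then there exists an encoding in which every set of k+1 distinct symbols contains two symbols that are distinguishable by a common attribute, if and only if G contains no independent set of size k+1. -/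
/-!
Distinguishable symbols are adjacent vertices, so an independent set of size `k + 1` defeats
every encoding. Conversely, since each edge has at least two values and is shared by only two
symbols, one encoding distinguishes the endpoints of all edges at once; under it, a set of
pairwise indistinguishable symbols is independent.
-/

/-- k-ary Partial Coding and independent sets.  For a finite simple graph `G` with one
symbol per vertex and, for each edge `{u,v}`, one attribute of value range
`f u v = f v u ≥ 2` contained exactly in the symbols of `u` and `v`, there is an
encoding in which every set of `k+1` distinct symbols contains two symbols
distinguishable by a common attribute iff `G` has no independent set of size `k+1`.
Here `c u v` is the value the symbol of `u` assigns to the attribute of edge `{u,v}`. -/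
theorem stmt_13 (V : Type) [Fintype V] [DecidableEq V]
    (G : SimpleGraph V) (k : ℕ) (hk : 1 ≤ k)
    (f : V → V → ℕ) (hfsymm : ∀ u v, f u v = f v u)
    (hf : ∀ u v, G.Adj u v → 2 ≤ f u v) :
    (∃ c : V → V → ℕ,
        (∀ u v, G.Adj u v → c u v < f u v) ∧
        ∀ S : Finset V, S.card = k + 1 →
          ∃ u ∈ S, ∃ v ∈ S, u ≠ v ∧ G.Adj u v ∧ c u v ≠ c v u)
      ↔ ¬ (∃ S : Finset V, S.card = k + 1 ∧
            ∀ u ∈ S, ∀ v ∈ S, u ≠ v → ¬ G.Adj u v) := by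
  constructor
  · rintro ⟨c, -, hc⟩ ⟨S, hS, hind⟩
    obtain ⟨u, hu, v, hv, huv, hadj, -⟩ := hc S hS
    exact hind u hu v hv huv hadj
  · intro h
    -- Orient every edge along an enumeration of the vertices: the smaller endpoint gets
    -- the value `0`, the larger one `1`, so the endpoints of each edge are distinguishable.
    let e := Fintype.equivFin V
    refine ⟨fun u v => if e u < e v then 0 else 1, ?_, ?_⟩
    · intro u v huv
      have h2 := hf u v huv
      dsimp only
      split_ifs <;> omega
    · intro S hS
      by_contra hno
      refine h ⟨S, hS, fun u hu v hv huv hadj => hno ⟨u, hu, v, hv, huv, hadj, ?_⟩⟩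
      rcases lt_or_gt_of_ne (e.injective.ne huv) with hlt | hlt
      · simp [hlt, hlt.not_gt]
      · simp [hlt, hlt.not_gt]
end

section
/- For every positive integer c there exists a constant C > 0 such that for every finite simple graph G on n ≥ 2 vertices with maximum degree at most c, there exist independent sets S_1,…,S_m of G with m ≤ C·log n such that for every pair of distinct non-adjacent vertices u, v there is some index i with u ∈ S_i and v ∈ S_i. -/
/-!
For a set `A` of vertices, the members of `A` with no neighbour in `A` form an independent set.
Two distinct non-adjacent vertices `u`, `v` both lie in it as soon as `A` contains `u` and `v` and
misses all their neighbours. This prescribes `A` on at most `2c + 2` vertices, so it happens for at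
least a fraction `q = 2 ^ (-(2c + 2))` of all sets `A` (`good_count`). Hence, by averaging,
whatever pairs remain uncovered, some `A` covers at least a fraction `q` of them, and `k` greedy
choices leave at most `(1 - q) ^ k * n ^ 2` pairs uncovered (`greedy_cover`). This is below `1` once
`q * k > 2 * log n`, and then every pair is covered (`exists_cover`).
-/

open Finset

open Classical in
/-- The vertices of `A` having no neighbour in `A`. -/
noncomputable def isolatedPart {n : ℕ} (G : SimpleGraph (Fin n)) (A : Finset (Fin n)) :
    Finset (Fin n) :=
  A.filter fun v => ∀ w ∈ A, ¬ G.Adj v w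

open Classical in
/-- Greedy covering: if every point of `P` is hit by at least a fraction `q` of the elements of
`α`, then `k` elements of `α` can be chosen that miss at most a fraction `(1 - q) ^ k` of `P`. -/
lemma greedy_cover {α β : Type*} [Fintype α] [Nonempty α] (P : Finset β) (R : α → β → Prop)
    (q : ℝ) (hq1 : q ≤ 1)
    (h : ∀ p ∈ P, q * Fintype.card α ≤ ((univ.filter fun a => R a p).card : ℝ)) (k : ℕ) :
    ∃ L : List α, L.length = k ∧
      ((P.filter fun p => ∀ a ∈ L, ¬ R a p).card : ℝ) ≤ (1 - q) ^ k * P.card := by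
  induction k with
  | zero => exact ⟨[], rfl, by simp⟩
  | succ k ih =>
    obtain ⟨L, hL, hU⟩ := ih
    set U := P.filter fun p => ∀ a ∈ L, ¬ R a p with hUdef
    -- Double counting the pairs `(a, p)` with `R a p` yields an `a` hitting a fraction `q` of `U`.
    obtain ⟨a, ha⟩ : ∃ a, q * U.card ≤ ((U.filter fun p => R a p).card : ℝ) := by
      by_contra! hcon
      have h1 : ∑ a : α, ((U.filter fun p => R a p).card : ℝ) < ∑ _a : α, q * U.card :=
        sum_lt_sum_of_nonempty univ_nonempty fun a _ => hcon a
      have h2 : ∑ a : α, ((U.filter fun p => R a p).card : ℝ)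
          = ∑ p ∈ U, ((univ.filter fun a => R a p).card : ℝ) := by
        simp only [card_filter, Nat.cast_sum]
        exact sum_comm
      have h3 : ∑ _p ∈ U, q * (Fintype.card α : ℝ)
          ≤ ∑ p ∈ U, ((univ.filter fun a => R a p).card : ℝ) :=
        sum_le_sum fun p hp => h p (mem_filter.1 hp).1
      simp only [sum_const, nsmul_eq_mul, card_univ] at h1 h3
      nlinarith
    refine ⟨a :: L, by simp [hL], ?_⟩
    have h4 : (P.filter fun p => ∀ b ∈ a :: L, ¬ R b p) = U.filter fun p => ¬ R a p := by
      ext p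
      simp only [hUdef, mem_filter, List.mem_cons, forall_eq_or_imp]
      tauto
    have h5 : ((U.filter fun p => R a p).card : ℝ) + (U.filter fun p => ¬ R a p).card = U.card := by
      exact_mod_cast card_filter_add_card_filter_not (s := U) (fun p => R a p)
    rw [h4, pow_succ]
    nlinarith [mul_le_mul_of_nonneg_left hU (sub_nonneg.2 hq1)]

open Classical in
lemma exists_cover {α β : Type*} [Fintype α] [Nonempty α] (P : Finset β) (R : α → β → Prop)
    (q : ℝ) (hq1 : q ≤ 1)
    (h : ∀ p ∈ P, q * Fintype.card α ≤ ((univ.filter fun a => R a p).card : ℝ)) (k : ℕ)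
    (hk : (1 - q) ^ k * (P.card : ℝ) < 1) :
    ∃ L : List α, L.length = k ∧ ∀ p ∈ P, ∃ a ∈ L, R a p := by
  obtain ⟨L, hL, hU⟩ := greedy_cover P R q hq1 h k
  have hempty := card_eq_zero.1 (Nat.cast_lt_one.1 (hU.trans_lt hk))
  refine ⟨L, hL, fun p hp => ?_⟩
  by_contra! hcon
  exact filter_eq_empty_iff.1 hempty hp hcon

open Classical in
/-- If all degrees are at most `c` and `u`, `v` are non-adjacent (possibly equal), a uniformly
random vertex set has both of them in its isolated part with
probability at least `2 ^ (-(2c + 2))`. -/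
lemma good_count {n c : ℕ} (G : SimpleGraph (Fin n)) (hG : ∀ v, (G.neighborSet v).ncard ≤ c)
    (u v : Fin n) (hadj : ¬ G.Adj u v) :
    (1 / 2 : ℝ) ^ (2 * c + 2) * Fintype.card (Finset (Fin n)) ≤
      ((univ.filter fun A => u ∈ isolatedPart G A ∧ v ∈ isolatedPart G A).card : ℝ) := by
  set good := univ.filter fun A => u ∈ isolatedPart G A ∧ v ∈ isolatedPart G A with hgood
  set T : Finset (Fin n) := (G.neighborFinset u ∪ G.neighborFinset v) ∪ {u, v} with hT
  have hdeg : ∀ w, (G.neighborFinset w).card ≤ c := fun w => by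
    have := hG w
    rwa [Set.ncard_eq_toFinset_card'] at this
  have hTc : T.card ≤ 2 * c + 2 := by
    have h1 := card_union_le (G.neighborFinset u ∪ G.neighborFinset v) {u, v}
    have h2 := card_union_le (G.neighborFinset u) (G.neighborFinset v)
    have h3 := card_le_two (a := u) (b := v)
    have h4 := hdeg u
    have h5 := hdeg v
    rw [← hT] at h1
    omega
  -- A set is determined by its trace on `T` and the good set obtained by resetting that trace
  -- to `{u, v}`.
  have hcard : (univ : Finset (Finset (Fin n))).card ≤ (good ×ˢ T.powerset).card := by
    refine card_le_card_of_injOn (fun A => ((A \ T) ∪ {u, v}, A ∩ T)) ?_ ?_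
    · intro A _
      have hna : ∀ x y, (x = u ∨ x = v) → y ∈ (A \ T) ∪ {u, v} → ¬ G.Adj x y := by
        intro x y hx hy hxy
        have hvu : ¬ G.Adj v u := fun h => hadj h.symm
        simp only [hT, mem_union, mem_sdiff, mem_insert, mem_singleton,
          SimpleGraph.mem_neighborFinset] at hy
        rcases hx with rfl | rfl <;> rcases hy with ⟨_, hy⟩ | rfl | rfl <;> simp_all
      simp only [coe_product, Set.mem_prod, mem_coe, mem_powerset, hgood, mem_filter, mem_univ,
        true_and, isolatedPart]
      refine ⟨⟨⟨by simp, fun w hw => hna u w (Or.inl rfl) hw⟩,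
        ⟨by simp, fun w hw => hna v w (Or.inr rfl) hw⟩⟩, inter_subset_right⟩
    · intro A _ B _ hAB
      simp only [Prod.mk.injEq] at hAB
      ext x
      have h1 := Finset.ext_iff.1 hAB.1 x
      have h2 := Finset.ext_iff.1 hAB.2 x
      have hu : u ∈ T := by simp [hT]
      have hv : v ∈ T := by simp [hT]
      simp only [mem_union, mem_sdiff, mem_insert, mem_singleton, mem_inter] at h1 h2
      by_cases hx : x ∈ T
      · simpa [hx] using h2
      · have hxu : x ≠ u := fun h => hx (h ▸ hu)
        have hxv : x ≠ v := fun h => hx (h ▸ hv)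
        simpa [hx, hxu, hxv] using h1
  rw [card_product, card_powerset, card_univ] at hcard
  have h6 : Fintype.card (Finset (Fin n)) ≤ good.card * 2 ^ (2 * c + 2) :=
    hcard.trans (Nat.mul_le_mul_left _ (Nat.pow_le_pow_right (by norm_num) hTc))
  have h7 : (Fintype.card (Finset (Fin n)) : ℝ) ≤ good.card * 2 ^ (2 * c + 2) := by
    exact_mod_cast h6
  rw [one_div, inv_pow, inv_mul_le_iff₀ (by positivity), mul_comm]
  exact h7

/-- Edge clique covers of logarithmic size in complements of bounded-degree graphs.
For every positive integer `c` there is a constant `C > 0` such that every finite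
simple graph on `n ≥ 2` vertices with maximum degree at most `c` has independent sets
`S_1,…,S_m` with `m ≤ C · log n` such that every pair of distinct non-adjacent
vertices lies together in some `S_i`. -/
theorem stmt_14 (c : ℕ) (hc : 0 < c) :
    ∃ C : ℝ, 0 < C ∧
      ∀ n : ℕ, 2 ≤ n → ∀ G : SimpleGraph (Fin n),
        (∀ v, (G.neighborSet v).ncard ≤ c) →
        ∃ (m : ℕ) (S : Fin m → Finset (Fin n)),
          (m : ℝ) ≤ C * Real.log n ∧
          (∀ i, ∀ u ∈ S i, ∀ v ∈ S i, u ≠ v → ¬ G.Adj u v) ∧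
          (∀ u v : Fin n, u ≠ v → ¬ G.Adj u v → ∃ i, u ∈ S i ∧ v ∈ S i) := by
  classical
  set q : ℝ := (1 / 2 : ℝ) ^ (2 * c + 2) with hq
  have hq0 : 0 < q := by positivity
  have hq1 : q ≤ 1 := pow_le_one₀ (by norm_num) (by norm_num)
  have hlog2 : 0 < Real.log 2 := Real.log_pos (by norm_num)
  -- The term `1 / log 2` absorbs the rounding of `2 * log n / q` up to an integer.
  refine ⟨2 / q + 1 / Real.log 2, by positivity, fun n hn G hG => ?_⟩
  have hnR : (2 : ℝ) ≤ n := by exact_mod_cast hn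
  have hlogn : Real.log 2 ≤ Real.log n := Real.log_le_log (by norm_num) hnR
  set k : ℕ := ⌊2 * Real.log n / q⌋₊ + 1 with hk
  set P : Finset (Fin n × Fin n) := univ.filter fun p => ¬ G.Adj p.1 p.2 with hP
  have hPc : (P.card : ℝ) ≤ n ^ 2 := by
    have : P.card ≤ n * n := by
      simpa using card_le_univ P
    rw [sq]
    exact_mod_cast this
  have hkq : 2 * Real.log n < q * k := by
    have := Nat.lt_floor_add_one (2 * Real.log n / q)
    rw [div_lt_iff₀ hq0] at this
    rw [hk]
    push_cast
    linarith
  have hlt : (1 - q) ^ k * (P.card : ℝ) < 1 := by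
    have h1 : (1 - q) ^ k ≤ Real.exp (-(q * k)) := by
      calc (1 - q) ^ k ≤ Real.exp (-q) ^ k :=
            pow_le_pow_left₀ (by linarith) (Real.one_sub_le_exp_neg q) k
        _ = Real.exp (-(q * k)) := by
            rw [← Real.exp_nat_mul]
            ring_nf
    have h2 : (n : ℝ) ^ 2 = Real.exp (2 * Real.log n) := by
      rw [two_mul, Real.exp_add, Real.exp_log (by linarith), sq]
    calc (1 - q) ^ k * (P.card : ℝ) ≤ Real.exp (-(q * k)) * n ^ 2 :=
          mul_le_mul h1 hPc (by positivity) (by positivity)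
      _ = Real.exp (-(q * k) + 2 * Real.log n) := by rw [h2, Real.exp_add]
      _ < 1 := by
          rw [Real.exp_lt_one_iff]
          linarith
  obtain ⟨L, hL, hcover⟩ := exists_cover P
    (fun A p => p.1 ∈ isolatedPart G A ∧ p.2 ∈ isolatedPart G A) q hq1
    (fun p hp => by convert good_count G hG p.1 p.2 (mem_filter.1 hp).2) k hlt
  refine ⟨L.length, fun i => isolatedPart G (L.get i), ?_, ?_, ?_⟩
  · rw [hL, hk]
    push_cast
    have h1 := Nat.floor_le (show 0 ≤ 2 * Real.log n / q by
      have : 0 ≤ Real.log n := hlog2.le.trans hlogn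
      positivity)
    have h2 : 1 ≤ 1 / Real.log 2 * Real.log n := by
      rw [one_div, ← div_eq_inv_mul, one_le_div hlog2]
      exact hlogn
    calc _ ≤ 2 * Real.log n / q + 1 / Real.log 2 * Real.log n := by linarith
      _ = _ := by ring
  · intro i u hu v hv _
    exact (mem_filter.1 hu).2 v (mem_filter.1 hv).1
  · intro u v _ hadj
    obtain ⟨A, hA, hAuv⟩ := hcover (u, v) (mem_filter.2 ⟨mem_univ _, hadj⟩)
    obtain ⟨i, rfl⟩ := List.get_of_mem hA
    exact ⟨i, hAuv⟩
end

section
/- Let G = (V, E) be a finite simple graph on n vertices, let k ≥ 2, and let S_1,…,S_m be independent sets of G such that every pair of distinct non-adjacent vertices lies together in some S_i. Consider the Partial Coding instance with one symbol per vertex, attributes a_1,…,a_m where a_i has value range f_i ≥ n and is contained exactly in the symbols of the vertices in S_i, and one additional attribute a* with value range k contained in all symbols. Then this instance admits a feasible encoding if and only if G admits a proper k-coloring. -/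
/-- Refined reduction from Graph Coloring to Partial Coding.  Let `G` be a simple graph
on `n` vertices, `k ≥ 2`, and let `S_1,…,S_m` be independent sets such that every pair
of distinct non-adjacent vertices lies together in some `S_i`.  The Partial Coding
instance with one symbol per vertex, an attribute `a_i` of value range `f i ≥ n`
contained exactly in the symbols of the vertices of `S_i`, and one attribute `a*` of
value range `k` contained in all symbols, admits a feasible encoding iff `G` admits a
proper `k`-coloring.  Here `c v i` is the value the symbol of `v` assigns to `a_i`
(relevant when `v ∈ S_i`) and `cstar v` its value on `a*`. -/
theorem stmt_15 (n m k : ℕ) (hk : 2 ≤ k)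
    (G : SimpleGraph (Fin n))
    (S : Fin m → Finset (Fin n)) (f : Fin m → ℕ)
    (hf : ∀ i, n ≤ f i)
    (hindep : ∀ i, ∀ u ∈ S i, ∀ v ∈ S i, u ≠ v → ¬ G.Adj u v)
    (hcover : ∀ u v : Fin n, u ≠ v → ¬ G.Adj u v → ∃ i, u ∈ S i ∧ v ∈ S i) :
    (∃ (c : Fin n → Fin m → ℕ) (cstar : Fin n → ℕ),
        (∀ v i, v ∈ S i → c v i < f i) ∧
        (∀ v, cstar v < k) ∧
        (∀ u v : Fin n, u ≠ v →
          (∃ i, u ∈ S i ∧ v ∈ S i ∧ c u i ≠ c v i) ∨ cstar u ≠ cstar v))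
      ↔ (∃ col : Fin n → ℕ,
          (∀ v, col v < k) ∧ ∀ u v, G.Adj u v → col u ≠ col v) := by
  constructor
  · -- Adjacent vertices share no `S i`, so only `a*` can separate them.
    rintro ⟨c, cstar, -, hlt, hsep⟩
    refine ⟨cstar, hlt, fun u v huv => ?_⟩
    rcases hsep u v huv.ne with ⟨i, hu, hv, -⟩ | h
    · exact absurd huv (hindep i u hu v hv huv.ne)
    · exact h
  · -- Every `a_i` stores the index of the vertex (this uses `n ≤ f i`), and `a*` its colour.
    rintro ⟨col, hlt, hcol⟩
    refine ⟨fun v _ => v, col, fun v i _ => v.isLt.trans_le (hf i), hlt, fun u v huv => ?_⟩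
    by_cases hadj : G.Adj u v
    · exact Or.inr (hcol u v hadj)
    · obtain ⟨i, hu, hv⟩ := hcover u v huv hadj
      exact Or.inl ⟨i, hu, hv, Fin.val_ne_of_ne huv⟩
end
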